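/- The 2×2 matrix W is orthogonal with determinant −1; that is, W_{11}² + W_{12}² = 1, W_{21}² + W_{22}² = 1, W_{11}W_{21} + W_{12}W_{22} = 0, and det W = −1. -/

import Mathlib

open Real Finset Matrix

noncomputable section

/-- `λ_j = ((μ−1) + (−1)^{j+1}·√(μ²−(4/q−2)μ+1))/2` for `j ∈ {1,2}`. -/
def lamJ (q : ℕ) (μ : ℝ) (j : ℕ) : ℝ :=
  ((μ - 1) + (-1 : ℝ) ^ (j + 1) * Real.sqrt (μ ^ 2 - (4 / (q : ℝ) - 2) * μ + 1)) / 2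

/-- `m_j = λ_j + 1`. -/
def mJ (q : ℕ) (μ : ℝ) (j : ℕ) : ℝ := lamJ q μ j + 1

/-- `x_j = 1 − q·m_j`. -/
def xJ (q : ℕ) (μ : ℝ) (j : ℕ) : ℝ := 1 - (q : ℝ) * mJ q μ j

/-- The 2×2 matrix
`W = (1/μ + q/(q−1))^{−1/2} · [[ (1/√m₂)/√(q−1+x₂²), (1/√m₁)/√(q−1+x₁²) ],`
`[ (1/√m₁)/√(q−1+x₁²), −(1/√m₂)/√(q−1+x₂²) ]]`
(rows and columns indexed by `Fin 2`, so `W 0 0` is the paper's `W_{11}`, etc.). -/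
def Wmat (q : ℕ) (μ : ℝ) : Matrix (Fin 2) (Fin 2) ℝ :=
  Matrix.of fun i j =>
    (Real.sqrt (1 / μ + (q : ℝ) / ((q : ℝ) - 1)))⁻¹ *
      (if i = 0 then
        (if j = 0 then (Real.sqrt (mJ q μ 2))⁻¹ / Real.sqrt ((q : ℝ) - 1 + xJ q μ 2 ^ 2)
         else (Real.sqrt (mJ q μ 1))⁻¹ / Real.sqrt ((q : ℝ) - 1 + xJ q μ 1 ^ 2))
       else
        (if j = 0 then (Real.sqrt (mJ q μ 1))⁻¹ / Real.sqrt ((q : ℝ) - 1 + xJ q μ 1 ^ 2)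
         else -((Real.sqrt (mJ q μ 2))⁻¹ / Real.sqrt ((q : ℝ) - 1 + xJ q μ 2 ^ 2))))

/-!
With `a = m₁` and `b = m₂`, Vieta's formulas read `a + b = 1 + μ` and `q a b = μ`, so that
`x₁ x₂ = 1 - q`. Hence `q - 1 + x₂² = x₂ (x₂ - x₁)`, and symmetrically in the indices, which
collapses the sum of the squares in a row of `W` by partial fractions. Since
`W = !![s, c; c, -s]`, the single identity `s² + c² = 1` gives everything else.
-/

section VietaIdentities

theorem one_sub_mul_mul_one_sub_mul {R : Type*} [CommRing R] {q a b : R}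
    (h : a + b = 1 + q * a * b) : (1 - q * a) * (1 - q * b) = 1 - q := by
  linear_combination -q * h

theorem sub_one_add_one_sub_mul_sq {R : Type*} [CommRing R] {q a b : R}
    (h : a + b = 1 + q * a * b) :
    q - 1 + (1 - q * b) ^ 2 = q * (a - b) * (1 - q * b) := by
  linear_combination one_sub_mul_mul_one_sub_mul h

variable {K : Type*} [Field K]

theorem inv_div_mul_sub_inv_div_mul {a b d x y : K} (ha : a ≠ 0) (hb : b ≠ 0) (hx : x ≠ 0)
    (hy : y ≠ 0) : b⁻¹ / (d * y) - a⁻¹ / (d * x) = (a * x - b * y) / (d * (a * b) * (x * y)) := by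
  field_simp

theorem inv_div_add_inv_div_eq {q a b : K} (h : a + b = 1 + q * a * b) (hq₀ : q ≠ 0)
    (hq₁ : q ≠ 1) (ha : a ≠ 0) (hb : b ≠ 0) (hab : a ≠ b) :
    b⁻¹ / (q - 1 + (1 - q * b) ^ 2) + a⁻¹ / (q - 1 + (1 - q * a) ^ 2) =
      1 / (q * a * b) + q / (q - 1) := by
  have h_swap : b + a = 1 + q * b * a := by linear_combination h
  have x_mul_x : (1 - q * a) * (1 - q * b) = 1 - q := one_sub_mul_mul_one_sub_mul h
  have hq₁' : q - 1 ≠ 0 := sub_ne_zero.2 hq₁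
  have hab' : a - b ≠ 0 := sub_ne_zero.2 hab
  have hx : (1 - q * a) * (1 - q * b) ≠ 0 := x_mul_x ▸ sub_ne_zero.2 hq₁.symm
  calc b⁻¹ / (q - 1 + (1 - q * b) ^ 2) + a⁻¹ / (q - 1 + (1 - q * a) ^ 2)
      = b⁻¹ / (q * (a - b) * (1 - q * b)) - a⁻¹ / (q * (a - b) * (1 - q * a)) := by
        rw [sub_one_add_one_sub_mul_sq h, sub_one_add_one_sub_mul_sq h_swap,
          ← neg_sub a b, mul_neg, neg_mul, div_neg, ← sub_eq_add_neg]
    _ = (a * (1 - q * a) - b * (1 - q * b)) /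
          (q * (a - b) * (a * b) * ((1 - q * a) * (1 - q * b))) :=
        inv_div_mul_sub_inv_div_mul ha hb (left_ne_zero_of_mul hx) (right_ne_zero_of_mul hx)
    _ = (a - b) * (q - 1 + q * (q * a * b)) / (q * (a - b) * (a * b) * (q - 1)) := by
        rw [x_mul_x, ← neg_sub q 1, mul_neg, div_neg, ← neg_div]
        congr 1
        linear_combination (a - b) * q * h
    _ = 1 / (q * a * b) + q / (q - 1) := by
        field_simp

end VietaIdentities

section Wmat

variable {q : ℕ} {μ : ℝ}

theorem lamJ_discr_pos (hq : 1 < q) (hμ : 0 < μ) :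
    0 < μ ^ 2 - (4 / (q : ℝ) - 2) * μ + 1 := by
  have q_inv_lt_one : (q : ℝ)⁻¹ < 1 := inv_lt_one_of_one_lt₀ (Nat.one_lt_cast.2 hq)
  calc 0 < (μ - 1) ^ 2 + 4 * μ * (1 - (q : ℝ)⁻¹) :=
        add_pos_of_nonneg_of_pos (sq_nonneg _) (mul_pos (by positivity) (sub_pos.2 q_inv_lt_one))
    _ = μ ^ 2 - (4 / (q : ℝ) - 2) * μ + 1 := by ring

theorem mJ_one_add_mJ_two (q : ℕ) (μ : ℝ) : mJ q μ 1 + mJ q μ 2 = 1 + μ := by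
  simp only [mJ, lamJ]
  ring

theorem mJ_one_sub_mJ_two (q : ℕ) (μ : ℝ) :
    mJ q μ 1 - mJ q μ 2 = √(μ ^ 2 - (4 / (q : ℝ) - 2) * μ + 1) := by
  simp only [mJ, lamJ]
  ring

theorem mJ_two_lt_mJ_one (hq : 1 < q) (hμ : 0 < μ) : mJ q μ 2 < mJ q μ 1 := by
  rw [← sub_pos, mJ_one_sub_mJ_two]
  exact Real.sqrt_pos.2 (lamJ_discr_pos hq hμ)

theorem mul_mJ_one_mul_mJ_two (hq : 1 < q) (hμ : 0 < μ) :
    (q : ℝ) * mJ q μ 1 * mJ q μ 2 = μ := by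
  have hq₀ : (q : ℝ) ≠ 0 := Nat.cast_ne_zero.2 (by lia)
  calc (q : ℝ) * mJ q μ 1 * mJ q μ 2
      = q * ((mJ q μ 1 + mJ q μ 2) ^ 2 - (mJ q μ 1 - mJ q μ 2) ^ 2) / 4 := by ring
    _ = q * ((1 + μ) ^ 2 - (μ ^ 2 - (4 / (q : ℝ) - 2) * μ + 1)) / 4 := by
        rw [mJ_one_add_mJ_two, mJ_one_sub_mJ_two, Real.sq_sqrt (lamJ_discr_pos hq hμ).le]
    _ = μ := by
        field_simp
        ring

theorem mJ_one_pos (q : ℕ) (hμ : 0 < μ) : 0 < mJ q μ 1 := by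
  have diff_nonneg : 0 ≤ mJ q μ 1 - mJ q μ 2 := mJ_one_sub_mJ_two q μ ▸ Real.sqrt_nonneg _
  linarith [mJ_one_add_mJ_two q μ]

theorem mJ_two_pos (hq : 1 < q) (hμ : 0 < μ) : 0 < mJ q μ 2 := by
  have triple_pos : 0 < (q : ℝ) * mJ q μ 1 * mJ q μ 2 := by rwa [mul_mJ_one_mul_mJ_two hq hμ]
  exact pos_of_mul_pos_right triple_pos (mul_nonneg q.cast_nonneg (mJ_one_pos q hμ).le)

theorem inv_mJ_div_add_inv_mJ_div (hq : 1 < q) (hμ : 0 < μ) :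
    (mJ q μ 2)⁻¹ / ((q : ℝ) - 1 + xJ q μ 2 ^ 2) + (mJ q μ 1)⁻¹ / ((q : ℝ) - 1 + xJ q μ 1 ^ 2) =
      1 / μ + (q : ℝ) / ((q : ℝ) - 1) := by
  have vieta : mJ q μ 1 + mJ q μ 2 = 1 + (q : ℝ) * mJ q μ 1 * mJ q μ 2 := by
    rw [mJ_one_add_mJ_two, mul_mJ_one_mul_mJ_two hq hμ]
  have sum_eq := inv_div_add_inv_div_eq vieta (Nat.cast_ne_zero.2 (by lia))
    (Nat.cast_ne_one.2 hq.ne') (mJ_one_pos q hμ).ne' (mJ_two_pos hq hμ).ne'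
    (mJ_two_lt_mJ_one hq hμ).ne'
  rwa [mul_mJ_one_mul_mJ_two hq hμ] at sum_eq

theorem inv_sqrt_mul_inv_sqrt_div_sqrt_sq {c m n : ℝ} (hc : 0 ≤ c) (hm : 0 ≤ m) (hn : 0 ≤ n) :
    ((√c)⁻¹ * ((√m)⁻¹ / √n)) ^ 2 = c⁻¹ * (m⁻¹ / n) := by
  rw [mul_pow, div_pow, inv_pow, inv_pow, Real.sq_sqrt hc, Real.sq_sqrt hm, Real.sq_sqrt hn]

theorem Wmat_one_zero (q : ℕ) (μ : ℝ) : Wmat q μ 1 0 = Wmat q μ 0 1 := by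
  simp [Wmat]

theorem Wmat_one_one (q : ℕ) (μ : ℝ) : Wmat q μ 1 1 = -Wmat q μ 0 0 := by
  simp [Wmat]

theorem Wmat_zero_zero_sq_add_Wmat_zero_one_sq (hq : 1 < q) (hμ : 0 < μ) :
    Wmat q μ 0 0 ^ 2 + Wmat q μ 0 1 ^ 2 = 1 := by
  have hq' : (0 : ℝ) < q - 1 := sub_pos.2 (Nat.one_lt_cast.2 hq)
  have scale_pos : 0 < 1 / μ + (q : ℝ) / ((q : ℝ) - 1) := by positivity
  have denom_nonneg (j : ℕ) : 0 ≤ (q : ℝ) - 1 + xJ q μ j ^ 2 := by positivity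
  simp only [Wmat, Matrix.of_apply, if_true, one_ne_zero, if_false]
  rw [inv_sqrt_mul_inv_sqrt_div_sqrt_sq scale_pos.le (mJ_two_pos hq hμ).le (denom_nonneg 2),
    inv_sqrt_mul_inv_sqrt_div_sqrt_sq scale_pos.le (mJ_one_pos q hμ).le (denom_nonneg 1),
    ← mul_add, inv_mJ_div_add_inv_mJ_div hq hμ, inv_mul_cancel₀ scale_pos.ne']

end Wmat

/-- The 2×2 matrix `W` is orthogonal with determinant `−1`: its rows are orthonormal
(`W₁₁² + W₁₂² = 1`, `W₂₁² + W₂₂² = 1`, `W₁₁W₂₁ + W₁₂W₂₂ = 0`) and `det W = −1`. -/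
theorem Wmat_orthogonal_det_neg_one
    (q : ℕ) (hq : 2 ≤ q) (μ : ℝ) (hμ : 0 < μ) :
    Wmat q μ 0 0 ^ 2 + Wmat q μ 0 1 ^ 2 = 1 ∧
    Wmat q μ 1 0 ^ 2 + Wmat q μ 1 1 ^ 2 = 1 ∧
    Wmat q μ 0 0 * Wmat q μ 1 0 + Wmat q μ 0 1 * Wmat q μ 1 1 = 0 ∧
    (Wmat q μ).det = -1 := by
  have row_norm := Wmat_zero_zero_sq_add_Wmat_zero_one_sq hq hμ
  rw [Matrix.det_fin_two, Wmat_one_zero, Wmat_one_one]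
  refine ⟨row_norm, ?_, ?_, ?_⟩
  · linear_combination row_norm
  · ring
  · linear_combination -row_norm

end
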